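/- Let p be an odd prime, G a finite powerful p-group, i ≥ 1 and j ≥ 0. Then [(Ω_i(G^{p²}))^{p^j}, Ω_i(G^p)] ≤ (Ω_i(G^{p²}))^{p^{j+2}}. -/

import Mathlib

/-!
Let `G` be a powerful `p`-group with `p` odd. Two facts about orders carry the proof.

* `TorsionMulClosed`: products of elements of order dividing `p ^ n` have order dividing `p ^ n`,
  so `Ω_n(H)` is just the set of elements of `H` of order dividing `p ^ n`.
* `CommutatorBound`: if `a` has order dividing `p ^ (i + 1)` and `b` has order dividing `p ^ i`,
  then `[a^{p^j}, b^{p^k}]` has order dividing `p ^ (i - j - k)`.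

Given these, take generators `a^{p^2}` of `Ω_i(G^{p^2})` and `b^p` of `Ω_i(G^p)`. The commutator
`[a^{p^{j+2}}, b^p]` lies in `G^{p^{j+4}}`, hence equals `(g^{p^2})^{p^{j+2}}` for some `g`, and it
has order dividing `p ^ (i - j - 2)`, so `g^{p^2}` belongs to `Ω_i(G^{p^2})`.

The two facts are proved together by induction on `|G|`. Torsion closure in the proper powerful
subgroups `⟨y⟩ G^p` shows that `[x, y]` has order at most that of `y`. In `G^p` it makes the
elements of order dividing `p ^ t` a normal subgroup `W` of `G`. The commutator bound follows by
descending induction on `i`: it is clear for large `i` from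
`[G^{p^j}, G^{p^k}] ≤ G^{p^{j+k+1}}`, and the step is a computation in class three modulo `W`
(`commutatorBound_step`). Torsion closure for `G` is then a computation in class two modulo `W`
(`torsionMulClosed_of_proper`). The standard facts on powerful groups, `powSeries_commutator` and
`exists_pow_pow_eq` (every element of `G^{p^m}` is a `p ^ m`-th power), are derived first.
-/

/-- The subgroup generated by the `n`-th powers of the elements of `H`. -/
def subgroupPow {G : Type*} [Group G] (H : Subgroup G) (n : ℕ) : Subgroup G :=
  Subgroup.closure {x | ∃ h ∈ H, h ^ n = x}

/-- `Ω_i(H)`: the subgroup generated by the elements of `H` whose order divides `p ^ i`. -/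
def omegaSubgroup {G : Type*} [Group G] (p i : ℕ) (H : Subgroup G) : Subgroup G :=
  Subgroup.closure {x | x ∈ H ∧ x ^ p ^ i = 1}

/-- A finite `p`-group `G` is powerful if `[G,G] ≤ G^p` when `p` is odd,
and `[G,G] ≤ G^4` when `p = 2`. -/
def IsPowerful (p : ℕ) (G : Type*) [Group G] : Prop :=
  if p = 2 then commutator G ≤ subgroupPow (⊤ : Subgroup G) 4
  else commutator G ≤ subgroupPow (⊤ : Subgroup G) p

/-- The subgroup of `n`-th powers of the whole group is normal (indeed characteristic). -/
instance subgroupPow_top_normal {G : Type*} [Group G] (n : ℕ) :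
    (subgroupPow (⊤ : Subgroup G) n).Normal := by
  constructor
  intro x hx g
  have key : Subgroup.map (MulAut.conj g).toMonoidHom (subgroupPow (⊤ : Subgroup G) n)
      ≤ subgroupPow (⊤ : Subgroup G) n := by
    rw [subgroupPow, MonoidHom.map_closure]
    apply Subgroup.closure_le _ |>.mpr
    rintro y ⟨z, ⟨h, -, rfl⟩, rfl⟩
    exact Subgroup.subset_closure ⟨(MulAut.conj g) h, trivial, by
      simp [((MulAut.conj g).toMonoidHom.map_pow h n).symm]⟩
  have hmem : (MulAut.conj g) x ∈
      Subgroup.map (MulAut.conj g).toMonoidHom (subgroupPow (⊤ : Subgroup G) n) :=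
    Subgroup.mem_map_of_mem _ hx
  simpa [MulAut.conj_apply] using key hmem

/-- A powerfully central chain `{1} = H 0 ≤ H 1 ≤ ⋯ ≤ H n = G` of length `n`:
`[H (k+1), G] ≤ (H k)^p` for all `k < n`. -/
def IsPowerfullyCentralChain (p : ℕ) {G : Type*} [Group G] (n : ℕ) (H : ℕ → Subgroup G) : Prop :=
  H 0 = ⊥ ∧ H n = ⊤ ∧ (∀ k, k < n → H k ≤ H (k + 1)) ∧
    ∀ k, k < n → ⁅H (k + 1), (⊤ : Subgroup G)⁆ ≤ subgroupPow (H k) p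

/-- A group is powerfully nilpotent if it is powerful and admits a powerfully central chain. -/
def IsPowerfullyNilpotent (p : ℕ) (G : Type*) [Group G] : Prop :=
  IsPowerful p G ∧ ∃ (n : ℕ) (H : ℕ → Subgroup G), IsPowerfullyCentralChain p n H

/-- The powerful nilpotency class: the least possible length of a powerfully central chain. -/
noncomputable def powerfulNilpotencyClass (p : ℕ) (G : Type*) [Group G] : ℕ :=
  sInf {n | ∃ H : ℕ → Subgroup G, IsPowerfullyCentralChain p n H}

open scoped commutatorElement

/-! ### Commutator calculus modulo a normal subgroup -/

/-- The power formula in nilpotency class two, with `c = [y⁻¹, x⁻¹]`. -/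
theorem mul_pow_of_class_two {Q : Type*} [Group Q] {x y c : Q} (h : y * x = x * y * c)
    (hx : Commute c x) (hy : Commute c y) (n : ℕ) :
    (x * y) ^ n = x ^ n * y ^ n * c ^ n.choose 2 := by
  have hyx : ∀ n : ℕ, y ^ n * x = x * y ^ n * c ^ n := by
    intro n
    induction n with
    | zero => simp
    | succ n ih =>
      calc y ^ (n + 1) * x = y ^ n * (y * x) := by rw [pow_succ, mul_assoc]
        _ = (y ^ n * x) * (y * c) := by rw [h]; group
        _ = x * y ^ n * (c ^ n * y) * c := by rw [ih]; group
        _ = x * y ^ n * (y * c ^ n) * c := by rw [(hy.pow_left n).eq]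
        _ = x * y ^ (n + 1) * c ^ (n + 1) := by rw [pow_succ, pow_succ]; group
  induction n with
  | zero => simp
  | succ n ih =>
    have hc : Commute (c ^ n.choose 2) (x * y) := (hx.mul_right hy).pow_left _
    have hc' : Commute (c ^ n) y := hy.pow_left _
    calc (x * y) ^ (n + 1) = x ^ n * y ^ n * (c ^ n.choose 2 * (x * y)) := by
          rw [pow_succ, ih]; group
      _ = x ^ n * (y ^ n * x) * y * c ^ n.choose 2 := by rw [hc.eq]; group
      _ = x ^ n * x * y ^ n * (c ^ n * y) * c ^ n.choose 2 := by rw [hyx]; group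
      _ = x ^ (n + 1) * y ^ (n + 1) * c ^ (n + 1).choose 2 := by
          rw [hc'.eq, Nat.choose_succ_succ' n 1, Nat.choose_one_right, pow_add, pow_succ, pow_succ]
          group

/-- Conjugation of `b` by `a ^ n` when the iterated commutators with `a` stop after `u` and `v`. -/
theorem conj_pow_of_class_three {Q : Type*} [Group Q] {a b u v : Q} (hb : a * b = b * u * a)
    (hu : a * u = u * v * a) (hav : Commute v a) (huv : Commute v u) (n : ℕ) :
    a ^ n * b = b * u ^ n * v ^ n.choose 2 * a ^ n := by
  have hun : ∀ n : ℕ, a * u ^ n = u ^ n * v ^ n * a := by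
    intro n
    have : a * u ^ n * a⁻¹ = u ^ n * v ^ n := by
      rw [← conj_pow, hu, mul_inv_cancel_right, huv.symm.mul_pow]
    rw [← this]; group
  induction n with
  | zero => simp
  | succ n ih =>
    have hc : Commute (v ^ n.choose 2) a := hav.pow_left _
    calc a ^ (n + 1) * b = a * (a ^ n * b) := by rw [pow_succ', mul_assoc]
      _ = (a * b) * u ^ n * v ^ n.choose 2 * a ^ n := by rw [ih]; group
      _ = b * u * (a * u ^ n) * v ^ n.choose 2 * a ^ n := by rw [hb]; group
      _ = b * u * u ^ n * v ^ n * (a * v ^ n.choose 2) * a ^ n := by rw [hun]; group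
      _ = b * u ^ (n + 1) * v ^ (n + 1).choose 2 * a ^ (n + 1) := by
          rw [hc.symm.eq, Nat.choose_succ_succ' n 1, Nat.choose_one_right, pow_add, pow_succ' u,
            pow_succ' a]
          group

theorem dvd_choose_two {p : ℕ} (hp : p.Prime) (hp2 : p ≠ 2) : p ∣ p.choose 2 :=
  hp.dvd_choose_self (by norm_num) (lt_of_le_of_ne hp.two_le hp2.symm)

theorem commutator_mem_iff {G : Type*} [Group G] (W : Subgroup G) [W.Normal] (x y : G) :
    ⁅x, y⁆ ∈ W ↔ Commute (x : G ⧸ W) (y : G ⧸ W) := by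
  rw [← QuotientGroup.eq_one_iff, ← commutatorElement_eq_one_iff_commute]
  rfl

/-- For odd `p`, the `p`-th power map is multiplicative on `x, y` modulo `W` as soon as their
commutator has order `p` and is central in `⟨x, y⟩` modulo `W`; the binomial coefficient
`p.choose 2` in the class-two formula is divisible by `p`. -/
theorem pow_mul_mem_of_commutators {G : Type*} [Group G] {p : ℕ} (hp : p.Prime) (hp2 : p ≠ 2)
    (W : Subgroup G) [W.Normal] {x y : G} (hc : ⁅y⁻¹, x⁻¹⁆ ^ p ∈ W)
    (hx : ⁅⁅y⁻¹, x⁻¹⁆, x⁆ ∈ W) (hy : ⁅⁅y⁻¹, x⁻¹⁆, y⁆ ∈ W) :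
    (x ^ p * y ^ p)⁻¹ * (x * y) ^ p ∈ W := by
  rw [commutator_mem_iff] at hx hy
  obtain ⟨m, hm⟩ := dvd_choose_two hp hp2
  have key := mul_pow_of_class_two (x := (x : G ⧸ W)) (y := (y : G ⧸ W)) ?_ hx hy p
  · rw [← QuotientGroup.eq_one_iff, QuotientGroup.mk_pow] at hc
    rw [hm, pow_mul, hc, one_pow, mul_one] at key
    rw [← QuotientGroup.eq]
    simpa using key.symm
  · rw [← QuotientGroup.mk_mul, ← QuotientGroup.mk_mul, ← QuotientGroup.mk_mul]
    congr 1
    rw [commutatorElement_def]; group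

/-- A criterion for `a ^ p` to commute with `b` modulo `W`, for odd `p`. -/
theorem commutator_pow_mem {G : Type*} [Group G] {p : ℕ} (hp : p.Prime) (hp2 : p ≠ 2)
    (W : Subgroup G) [W.Normal] {a b u v : G} (hu : u = ⁅b⁻¹, a⁆) (hv : v = ⁅u⁻¹, a⁆)
    (hup : u ^ p ∈ W) (hva : ⁅v, a⁆ ∈ W) (hvu : ⁅v, u⁆ ∈ W) : ⁅a ^ p, b⁆ ∈ W := by
  rw [commutator_mem_iff] at hva hvu ⊢
  rw [← QuotientGroup.eq_one_iff, QuotientGroup.mk_pow] at hup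
  obtain ⟨m, hm⟩ := dvd_choose_two hp hp2
  have hb : (a : G ⧸ W) * b = b * u * a := by
    rw [← QuotientGroup.mk_mul, ← QuotientGroup.mk_mul, ← QuotientGroup.mk_mul, hu,
      commutatorElement_def]
    congr 1; group
  have hua : (a : G ⧸ W) * u = u * v * a := by
    rw [← QuotientGroup.mk_mul, ← QuotientGroup.mk_mul, ← QuotientGroup.mk_mul, hv,
      commutatorElement_def]
    congr 1; group
  -- Conjugating `u ^ p = 1` by `a` gives `v ^ p = 1`.
  have hvp : (v : G ⧸ W) ^ p = 1 := by
    have h1 : ((a : G ⧸ W) * u * (a : G ⧸ W)⁻¹) ^ p = 1 := by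
      rw [conj_pow, hup]; group
    rwa [hua, mul_inv_cancel_right, hvu.symm.mul_pow, hup, one_mul] at h1
  have key := conj_pow_of_class_three hb hua hva hvu p
  rw [hm, pow_mul, hvp, hup, one_pow, mul_one, mul_one] at key
  exact key

theorem commutator_mem_of_closure {G : Type*} [Group G] (W : Subgroup G) [W.Normal] {S : Set G}
    {g : G} (h : ∀ s ∈ S, ⁅s, g⁆ ∈ W) {x : G} (hx : x ∈ Subgroup.closure S) : ⁅x, g⁆ ∈ W := by
  rw [commutator_mem_iff]
  induction hx using Subgroup.closure_induction with
  | mem x hx => exact (commutator_mem_iff W x g).1 (h x hx)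
  | one => exact Commute.one_left _
  | mul x y _ _ hx hy => exact hx.mul_left hy
  | inv x _ hx => exact hx.inv_left

theorem commutator_mem_symm {G : Type*} [Group G] {W : Subgroup G} {x y : G} (h : ⁅x, y⁆ ∈ W) :
    ⁅y, x⁆ ∈ W := by
  rw [← commutatorElement_inv]; exact W.inv_mem h

/-! ### Power subgroups and powerful embedding -/

theorem pow_mem_subgroupPow {G : Type*} [Group G] {H : Subgroup G} {x : G} (hx : x ∈ H) (n : ℕ) :
    x ^ n ∈ subgroupPow H n :=
  Subgroup.subset_closure ⟨x, hx, rfl⟩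

theorem subgroupPow_le {G : Type*} [Group G] {H : Subgroup G} (n : ℕ) : subgroupPow H n ≤ H := by
  refine (Subgroup.closure_le _).2 ?_
  rintro _ ⟨x, hx, rfl⟩
  exact H.pow_mem hx n

theorem subgroupPow_mono {G : Type*} [Group G] {H K : Subgroup G} (h : H ≤ K) (n : ℕ) :
    subgroupPow H n ≤ subgroupPow K n := by
  refine Subgroup.closure_mono ?_
  rintro _ ⟨x, hx, rfl⟩
  exact ⟨x, h hx, rfl⟩

theorem normal_closure_of_conj_mem {G : Type*} [Group G] {S : Set G}
    (h : ∀ s ∈ S, ∀ g : G, g * s * g⁻¹ ∈ S) : (Subgroup.closure S).Normal := by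
  refine ⟨fun x hx g => ?_⟩
  induction hx using Subgroup.closure_induction with
  | mem x hx => exact Subgroup.subset_closure (h x hx g)
  | one => simp
  | mul x y _ _ hx hy => rw [← conj_mul]; exact mul_mem hx hy
  | inv x _ hx => rw [← conj_inv]; exact inv_mem hx

instance subgroupPow_normal {G : Type*} [Group G] (H : Subgroup G) [hH : H.Normal] (n : ℕ) :
    (subgroupPow H n).Normal := by
  refine normal_closure_of_conj_mem ?_
  rintro _ ⟨x, hx, rfl⟩ g
  exact ⟨g * x * g⁻¹, hH.conj_mem x hx g, conj_pow⟩

/-- A Nakayama-type lemma for nilpotent groups: iterating the inclusion replaces `[A, G]` by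
arbitrarily long commutators. -/
theorem le_of_le_sup_commutator {G : Type*} [Group G] [Group.IsNilpotent G] {A B : Subgroup G}
    [B.Normal] (h : A ≤ B ⊔ ⁅A, (⊤ : Subgroup G)⁆) : A ≤ B := by
  have key : ∀ n, A ≤ B ⊔ (⊤ : Subgroup G).lowerCentralSeries n := by
    intro n
    induction n with
    | zero => simp
    | succ n ih =>
      refine h.trans (sup_le le_sup_left ?_)
      rw [Subgroup.commutator_le]
      intro x hx g _
      obtain ⟨b, hb, l, hl, rfl⟩ := Subgroup.mem_sup_of_normal_left.1 (ih hx)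
      have hbl : b * l ∈ Subgroup.closure {b, l} :=
        mul_mem (Subgroup.subset_closure (Set.mem_insert b {l}))
          (Subgroup.subset_closure (Set.mem_insert_of_mem b rfl))
      refine commutator_mem_of_closure _ ?_ hbl
      rintro s (rfl | rfl)
      · exact Subgroup.mem_sup_left
          (Subgroup.commutator_le_left B ⊤ (Subgroup.commutator_mem_commutator hb trivial))
      · exact Subgroup.mem_sup_right (Subgroup.commutator_mem_commutator hl trivial)
  obtain ⟨n, hn⟩ := Subgroup.nilpotent_iff_lowerCentralSeries.1 (inferInstance : Group.IsNilpotent G)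
  simpa [hn] using key n

/-- If `N` is powerfully embedded in `G`, so is `N^p`. Modulo `(N^p)^p [N^p, G, G]` the criterion
`commutator_pow_mem` applies to the generators of `N^p`, and nilpotency removes `[N^p, G, G]`. -/
theorem powerfullyEmbedded_pow {G : Type*} [Group G] [Group.IsNilpotent G] {p : ℕ}
    (hp : p.Prime) (hp2 : p ≠ 2) (N : Subgroup G) [N.Normal]
    (hN : ∀ x ∈ N, ∀ g : G, ⁅x, g⁆ ∈ subgroupPow N p) :
    ∀ x ∈ subgroupPow N p, ∀ g : G, ⁅x, g⁆ ∈ subgroupPow (subgroupPow N p) p := by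
  have key : ⁅subgroupPow N p, (⊤ : Subgroup G)⁆ ≤ subgroupPow (subgroupPow N p) p := by
    refine le_of_le_sup_commutator ?_
    rw [Subgroup.commutator_le]
    intro x hx g _
    refine commutator_mem_of_closure _ ?_ hx
    rintro _ ⟨y, hy, rfl⟩
    have hu : ⁅g⁻¹, y⁆ ∈ subgroupPow N p := commutator_mem_symm (hN y hy _)
    have hv : ⁅⁅g⁻¹, y⁆⁻¹, y⁆ ∈ ⁅subgroupPow N p, (⊤ : Subgroup G)⁆ :=
      Subgroup.commutator_mem_commutator (inv_mem hu) trivial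
    refine commutator_pow_mem hp hp2 _ rfl rfl ?_ ?_ ?_
    · exact Subgroup.mem_sup_left (pow_mem_subgroupPow hu p)
    · exact Subgroup.mem_sup_right (Subgroup.commutator_mem_commutator hv trivial)
    · exact Subgroup.mem_sup_right (Subgroup.commutator_mem_commutator hv trivial)
  exact fun x hx g => key (Subgroup.commutator_mem_commutator hx trivial)

/-! ### The power series of a powerful group -/

/-- The iterated power series `G, G^p, (G^p)^p, …`. In a powerful group its `m`-th term is
`G^{p^m}`, see `powSeries_eq`. -/
def powSeries (p : ℕ) (G : Type*) [Group G] : ℕ → Subgroup G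
  | 0 => ⊤
  | m + 1 => subgroupPow (powSeries p G m) p

instance powSeries_normal (p : ℕ) (G : Type*) [Group G] (m : ℕ) : (powSeries p G m).Normal := by
  induction m with
  | zero => exact inferInstanceAs (⊤ : Subgroup G).Normal
  | succ m ih => exact subgroupPow_normal _ p

theorem powSeries_antitone (p : ℕ) (G : Type*) [Group G] : Antitone (powSeries p G) :=
  antitone_nat_of_succ_le fun _ => subgroupPow_le p

theorem pow_mem_powSeries {p : ℕ} {G : Type*} [Group G] {m : ℕ} {x : G}
    (hx : x ∈ powSeries p G m) (n : ℕ) : x ^ p ^ n ∈ powSeries p G (m + n) := by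
  induction n with
  | zero => simpa using hx
  | succ n ih => rw [pow_succ, pow_mul]; exact pow_mem_subgroupPow ih p

theorem pow_mem_powSeries_top (p : ℕ) {G : Type*} [Group G] (x : G) (n : ℕ) :
    x ^ p ^ n ∈ powSeries p G n := by
  simpa using pow_mem_powSeries (m := 0) (p := p) (x := x) trivial n

/-- A proper subgroup of a finite `p`-group lies, together with all `p`-th powers, in a proper
subgroup (a maximal one, of index `p`). -/
theorem sup_subgroupPow_ne_top {p : ℕ} (hp : p.Prime) {G : Type*} [Group G] [Finite G]
    (hG : IsPGroup p G) {H : Subgroup G} (hH : H ≠ ⊤) : H ⊔ subgroupPow ⊤ p ≠ ⊤ := by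
  have : Fact p.Prime := ⟨hp⟩
  obtain ⟨n, hn⟩ := IsPGroup.iff_card.1 hG
  obtain ⟨k, hk⟩ := IsPGroup.iff_card.1 (hG.to_subgroup H)
  have hlt : k < n := by
    have h1 : Nat.card H < Nat.card G := by
      refine lt_of_le_of_ne (Subgroup.card_le_card_group H) fun h => hH ?_
      exact Subgroup.eq_top_of_card_eq H h
    rw [hn, hk] at h1
    exact (Nat.pow_lt_pow_iff_right hp.one_lt).1 h1
  obtain ⟨m, rfl⟩ : ∃ m, n = m + 1 := ⟨n - 1, by omega⟩
  obtain ⟨K, hK, hHK⟩ := Sylow.exists_subgroup_card_pow_prime_le p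
    (by rw [hn]; exact pow_dvd_pow p m.le_succ) H hk (Nat.lt_succ_iff.1 hlt)
  have hidx : K.index = p := by
    have h := K.card_mul_index
    rw [hK, hn, pow_succ] at h
    exact Nat.eq_of_mul_eq_mul_left (pow_pos hp.pos m) h
  have hKn : K.Normal := Subgroup.normal_of_index_eq_minFac_card (by
    rw [hidx, hn, hp.pow_minFac (Nat.succ_ne_zero m)])
  have hle : H ⊔ subgroupPow ⊤ p ≤ K := by
    refine sup_le hHK ((Subgroup.closure_le _).2 ?_)
    rintro _ ⟨x, -, rfl⟩
    have h := K.pow_index_mem x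
    rwa [hidx] at h
  intro htop
  have hKtop : K = ⊤ := top_le_iff.1 (htop ▸ hle)
  rw [hKtop, Subgroup.index_top] at hidx
  exact hp.one_lt.ne hidx

theorem map_subtype_subgroupPow {G : Type*} [Group G] (H : Subgroup G) (n : ℕ) :
    (subgroupPow (⊤ : Subgroup H) n).map H.subtype = subgroupPow H n := by
  rw [subgroupPow, MonoidHom.map_closure, subgroupPow]
  congr 1
  ext x
  constructor
  · rintro ⟨_, ⟨h, -, rfl⟩, rfl⟩
    exact ⟨h, h.2, by simp⟩
  · rintro ⟨h, hh, rfl⟩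
    exact ⟨⟨h, hh⟩ ^ n, ⟨⟨h, hh⟩, trivial, rfl⟩, by simp⟩

theorem subgroupPow_lt {p : ℕ} (hp : p.Prime) {G : Type*} [Group G] [Finite G]
    (hG : IsPGroup p G) {H : Subgroup G} (hH : H ≠ ⊥) : subgroupPow H p < H := by
  refine lt_of_le_of_ne (subgroupPow_le p) fun h => ?_
  have hne : (⊥ : Subgroup H) ≠ ⊤ := by
    have := (Subgroup.nontrivial_iff_ne_bot H).2 hH
    exact bot_ne_top
  apply sup_subgroupPow_ne_top hp (hG.to_subgroup H) hne
  rw [bot_sup_eq]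
  apply Subgroup.map_injective H.subtype_injective
  rw [map_subtype_subgroupPow, h, ← MonoidHom.range_eq_map, H.range_subtype]

theorem exists_powSeries_eq_bot {p : ℕ} (hp : p.Prime) (G : Type*) [Group G] [Finite G]
    (hG : IsPGroup p G) : ∃ m, powSeries p G m = ⊥ := by
  by_contra! hne
  have hanti : StrictAnti (powSeries p G) :=
    strictAnti_nat_of_succ_lt fun m => subgroupPow_lt hp hG (hne m)
  exact not_injective_infinite_finite _ hanti.injective

/-- Each `G^{p^m}` is powerfully embedded in the powerful group `G`. -/
theorem powSeries_commutator_top {p : ℕ} (hp : p.Prime) (hp2 : p ≠ 2) {G : Type*} [Group G]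
    [Finite G] (hG : IsPGroup p G) (hpow : ∀ x y : G, ⁅x, y⁆ ∈ subgroupPow ⊤ p) (m : ℕ) :
    ∀ x ∈ powSeries p G m, ∀ g : G, ⁅x, g⁆ ∈ powSeries p G (m + 1) := by
  have : Fact p.Prime := ⟨hp⟩
  have := hG.isNilpotent
  induction m with
  | zero => exact fun x _ g => hpow x g
  | succ m ih => exact powerfullyEmbedded_pow hp hp2 _ ih

/-- `[G^{p^a}, G^{p^b}] ≤ G^{p^{a+b+1}}`. -/
theorem powSeries_commutator {p : ℕ} (hp : p.Prime) (hp2 : p ≠ 2) {G : Type*} [Group G]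
    [Finite G] (hG : IsPGroup p G) (hpow : ∀ x y : G, ⁅x, y⁆ ∈ subgroupPow ⊤ p) (a b : ℕ) :
    ∀ x ∈ powSeries p G a, ∀ y ∈ powSeries p G b, ⁅x, y⁆ ∈ powSeries p G (a + b + 1) := by
  have hemb := powSeries_commutator_top hp hp2 hG hpow
  induction b with
  | zero => exact fun x hx y _ => hemb a x hx y
  | succ b ih =>
    intro x hx y hy
    refine commutator_mem_symm (commutator_mem_of_closure _ ?_ hy)
    rintro _ ⟨z, hz, rfl⟩
    have hu : ⁅x⁻¹, z⁆ ∈ powSeries p G (a + b + 1) := ih _ (inv_mem hx) z hz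
    have hv : ⁅⁅x⁻¹, z⁆⁻¹, z⁆ ∈ powSeries p G (a + b + 1 + 1) := hemb _ _ (inv_mem hu) z
    refine commutator_pow_mem hp hp2 _ rfl rfl (pow_mem_subgroupPow hu p) ?_ ?_
    · exact subgroupPow_le p (hemb _ _ hv z)
    · exact subgroupPow_le p (hemb _ _ hv _)

/-- `(x y)^p ≡ x^p y^p` modulo `G^{p^{m+2}}` for `y ∈ G^{p^m}`. -/
theorem mul_pow_powSeries {p : ℕ} (hp : p.Prime) (hp2 : p ≠ 2) {G : Type*} [Group G]
    [Finite G] (hG : IsPGroup p G) (hpow : ∀ x y : G, ⁅x, y⁆ ∈ subgroupPow ⊤ p) (m : ℕ)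
    (x : G) {y : G} (hy : y ∈ powSeries p G m) :
    (x ^ p * y ^ p)⁻¹ * (x * y) ^ p ∈ powSeries p G (m + 2) := by
  have hemb := powSeries_commutator_top hp hp2 hG hpow
  have hc : ⁅y⁻¹, x⁻¹⁆ ∈ powSeries p G (m + 1) := hemb m _ (inv_mem hy) _
  exact pow_mul_mem_of_commutators hp hp2 _ (pow_mem_subgroupPow hc p) (hemb _ _ hc x)
    (hemb _ _ hc y)

/-- Modulo `G^{p^{m+2}}`, each element of `G^{p^{m+1}}` is the `p`-th power of an element of
`G^{p^m}`. -/
theorem exists_pow_mod {p : ℕ} (hp : p.Prime) (hp2 : p ≠ 2) {G : Type*} [Group G]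
    [Finite G] (hG : IsPGroup p G) (hpow : ∀ x y : G, ⁅x, y⁆ ∈ subgroupPow ⊤ p) (m : ℕ)
    {g : G} (hg : g ∈ powSeries p G (m + 1)) :
    ∃ y ∈ powSeries p G m, (y ^ p)⁻¹ * g ∈ powSeries p G (m + 2) := by
  simp only [← QuotientGroup.eq]
  have hmul : ∀ x : G, ∀ y ∈ powSeries p G m,
      (((x * y) ^ p : G) : G ⧸ powSeries p G (m + 2)) = (x ^ p : G) * (y ^ p : G) := by
    intro x y hy
    rw [← QuotientGroup.mk_mul]
    exact (QuotientGroup.eq.2 (mul_pow_powSeries hp hp2 hG hpow m x hy)).symm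
  induction hg using Subgroup.closure_induction with
  | mem g hg =>
    obtain ⟨y, hy, rfl⟩ := hg
    exact ⟨y, hy, rfl⟩
  | one => exact ⟨1, one_mem _, by simp⟩
  | mul g h _ _ hg hh =>
    obtain ⟨x, hx, hxg⟩ := hg
    obtain ⟨y, hy, hyh⟩ := hh
    exact ⟨x * y, mul_mem hx hy, by rw [hmul x y hy, hxg, hyh]; rfl⟩
  | inv g _ hg =>
    obtain ⟨x, hx, hxg⟩ := hg
    exact ⟨x⁻¹, inv_mem hx, by
      rw [inv_pow, QuotientGroup.mk_inv, QuotientGroup.mk_inv, hxg]⟩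

/-- Every element of `G^{p^{m+1}}` is the `p`-th power of an element of `G^{p^m}`: successive
approximation along the series, which reaches the trivial group. -/
theorem exists_pow_eq {p : ℕ} (hp : p.Prime) (hp2 : p ≠ 2) {G : Type*} [Group G]
    [Finite G] (hG : IsPGroup p G) (hpow : ∀ x y : G, ⁅x, y⁆ ∈ subgroupPow ⊤ p) (m : ℕ)
    {g : G} (hg : g ∈ powSeries p G (m + 1)) : ∃ x ∈ powSeries p G m, x ^ p = g := by
  have approx : ∀ n, ∃ x ∈ powSeries p G m, (x ^ p)⁻¹ * g ∈ powSeries p G (m + n + 1) := by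
    intro n
    induction n with
    | zero => exact ⟨1, one_mem _, by simpa using hg⟩
    | succ n ih =>
      obtain ⟨x, hx, hxg⟩ := ih
      obtain ⟨y, hy, hyg⟩ := exists_pow_mod hp hp2 hG hpow (m + n) hxg
      refine ⟨x * y, mul_mem hx (powSeries_antitone p G (Nat.le_add_right m n) hy), ?_⟩
      have h := mul_mem (inv_mem (mul_pow_powSeries hp hp2 hG hpow (m + n) x hy)) hyg
      convert h using 1
      group
  obtain ⟨n, hn⟩ := exists_powSeries_eq_bot hp G hG
  obtain ⟨x, hx, hxg⟩ := approx n
  have h := powSeries_antitone p G (show n ≤ m + n + 1 by omega) hxg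
  rw [hn, Subgroup.mem_bot, inv_mul_eq_one] at h
  exact ⟨x, hx, h⟩

theorem exists_pow_pow_eq {p : ℕ} (hp : p.Prime) (hp2 : p ≠ 2) {G : Type*} [Group G]
    [Finite G] (hG : IsPGroup p G) (hpow : ∀ x y : G, ⁅x, y⁆ ∈ subgroupPow ⊤ p) (m : ℕ)
    {g : G} (hg : g ∈ powSeries p G m) : ∃ x : G, x ^ p ^ m = g := by
  induction m generalizing g with
  | zero => exact ⟨g, by simp⟩
  | succ m ih =>
    obtain ⟨y, hy, rfl⟩ := exists_pow_eq hp hp2 hG hpow m hg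
    obtain ⟨x, rfl⟩ := ih hy
    exact ⟨x, by rw [pow_succ, pow_mul]⟩

theorem powSeries_eq {p : ℕ} (hp : p.Prime) (hp2 : p ≠ 2) {G : Type*} [Group G]
    [Finite G] (hG : IsPGroup p G) (hpow : ∀ x y : G, ⁅x, y⁆ ∈ subgroupPow ⊤ p) (m : ℕ) :
    subgroupPow (⊤ : Subgroup G) (p ^ m) = powSeries p G m := by
  apply le_antisymm
  · refine (Subgroup.closure_le _).2 ?_
    rintro _ ⟨x, -, rfl⟩
    exact pow_mem_powSeries_top p x m
  · intro g hg
    obtain ⟨x, rfl⟩ := exists_pow_pow_eq hp hp2 hG hpow m hg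
    exact pow_mem_subgroupPow (Subgroup.mem_top x) _

/-! ### Orders of commutators and products -/

/-- The elements of `G` whose order divides `p ^ n` are closed under multiplication, for every
`n`; equivalently `Ω_n(G)` has exponent dividing `p ^ n`. -/
def TorsionMulClosed (p : ℕ) (G : Type*) [Group G] : Prop :=
  ∀ n (x y : G), x ^ p ^ n = 1 → y ^ p ^ n = 1 → (x * y) ^ p ^ n = 1

/-- `TorsionMulClosed` for all powerful proper subgroups of `G`, the hypothesis available in an
induction on the order of `G`. -/
def ProperTorsionMulClosed (p : ℕ) (G : Type*) [Group G] : Prop :=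
  ∀ H : Subgroup G, H ≠ ⊤ → (∀ x ∈ H, ∀ y ∈ H, ⁅x, y⁆ ∈ subgroupPow H p) →
    ∀ n, ∀ x ∈ H, ∀ y ∈ H, x ^ p ^ n = 1 → y ^ p ^ n = 1 → (x * y) ^ p ^ n = 1

/-- If `y` has order dividing `p ^ n`, so has `[x, y]`: it is the product of `x y x⁻¹` and `y⁻¹`,
which both lie in the powerful subgroup `⟨y⟩ G^p`; this subgroup is proper unless `G = ⟨y⟩`. -/
theorem commutator_pow_eq_one {p : ℕ} (hp : p.Prime) (hp2 : p ≠ 2) {G : Type*} [Group G]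
    [Finite G] (hG : IsPGroup p G) (hpow : ∀ x y : G, ⁅x, y⁆ ∈ subgroupPow ⊤ p)
    (IH : ProperTorsionMulClosed p G) {n : ℕ} (x : G) {y : G} (hy : y ^ p ^ n = 1) :
    ⁅x, y⁆ ^ p ^ n = 1 := by
  by_cases hcyc : Subgroup.zpowers y = ⊤
  · obtain ⟨k, rfl⟩ := Subgroup.mem_zpowers_iff.1 (hcyc ▸ Subgroup.mem_top x)
    rw [((Commute.refl y).zpow_left k).commutator_eq, one_pow]
  set H : Subgroup G := Subgroup.zpowers y ⊔ powSeries p G 1 with hHdef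
  have hyH : y ∈ H := Subgroup.mem_sup_left (Subgroup.mem_zpowers y)
  have hcH : ∀ z : G, ⁅z, y⁆ ∈ H := fun z => Subgroup.mem_sup_right (hpow z y)
  have hHpow : ∀ x ∈ H, ∀ y ∈ H, ⁅x, y⁆ ∈ subgroupPow H p := by
    have hle : powSeries p G 2 ≤ subgroupPow H p := subgroupPow_mono le_sup_right p
    intro g hg h hh
    apply hle
    obtain ⟨a, ha, d, hd, rfl⟩ := Subgroup.mem_sup_of_normal_right.1 hg
    obtain ⟨b, hb, e, he, rfl⟩ := Subgroup.mem_sup_of_normal_right.1 hh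
    have hemb : ∀ d ∈ powSeries p G 1, ∀ g : G,
        Commute (d : G ⧸ powSeries p G 2) (g : G ⧸ powSeries p G 2) := fun d hd g =>
      (commutator_mem_iff _ d g).1 (powSeries_commutator_top hp hp2 hG hpow 1 d hd g)
    rw [commutator_mem_iff, QuotientGroup.mk_mul, QuotientGroup.mk_mul]
    obtain ⟨r, rfl⟩ := Subgroup.mem_zpowers_iff.1 ha
    obtain ⟨s, rfl⟩ := Subgroup.mem_zpowers_iff.1 hb
    have hrs : Commute ((y ^ r : G) : G ⧸ powSeries p G 2) ((y ^ s : G) : G ⧸ powSeries p G 2) := by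
      rw [QuotientGroup.mk_zpow, QuotientGroup.mk_zpow]
      exact (Commute.refl _).zpow_zpow r s
    exact (hrs.mul_left (hemb d hd _)).mul_right ((hemb e he _).symm.mul_left (hemb d hd _))
  have hconj : x * y * x⁻¹ ∈ H := by
    have h := mul_mem (hcH x) hyH
    rwa [commutatorElement_def, inv_mul_cancel_right] at h
  rw [commutatorElement_def]
  refine IH H (sup_subgroupPow_ne_top hp hG hcyc) hHpow n _ hconj _ (inv_mem hyH) ?_ ?_
  · rw [conj_pow, hy]; group
  · rw [inv_pow, hy, inv_one]

/-- The elements of `G^p` of order dividing `p ^ t`, a normal subgroup of `G` because `G^p` is a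
powerful proper subgroup. -/
theorem exists_torsion_subgroup {p : ℕ} (hp : p.Prime) (hp2 : p ≠ 2) {G : Type*} [Group G]
    [Finite G] [Nontrivial G] (hG : IsPGroup p G) (hpow : ∀ x y : G, ⁅x, y⁆ ∈ subgroupPow ⊤ p)
    (IH : ProperTorsionMulClosed p G) (t : ℕ) :
    ∃ W : Subgroup G, W.Normal ∧ ∀ x, x ∈ W ↔ x ∈ powSeries p G 1 ∧ x ^ p ^ t = 1 := by
  have hne : powSeries p G 1 ≠ ⊤ := (subgroupPow_lt hp hG (bot_ne_top.symm)).ne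
  have hpw : ∀ x ∈ powSeries p G 1, ∀ y ∈ powSeries p G 1,
      ⁅x, y⁆ ∈ subgroupPow (powSeries p G 1) p := fun x hx y _ =>
    powSeries_commutator_top hp hp2 hG hpow 1 x hx y
  let W : Subgroup G :=
    { carrier := {x | x ∈ powSeries p G 1 ∧ x ^ p ^ t = 1}
      one_mem' := ⟨one_mem _, one_pow _⟩
      mul_mem' := fun {x y} hx hy =>
        ⟨mul_mem hx.1 hy.1, IH _ hne hpw t x hx.1 y hy.1 hx.2 hy.2⟩
      inv_mem' := fun {x} hx => ⟨inv_mem hx.1, by rw [inv_pow, hx.2, inv_one]⟩ }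
  refine ⟨W, ⟨fun x hx g => ⟨(powSeries_normal p G 1).conj_mem x hx.1 g, ?_⟩⟩, fun x => Iff.rfl⟩
  rw [conj_pow, hx.2]; group

theorem pow_eq_one_mono {G : Type*} [Group G] {p m n : ℕ} (h : m ≤ n) {x : G}
    (hx : x ^ p ^ m = 1) : x ^ p ^ n = 1 :=
  orderOf_dvd_iff_pow_eq_one.1 ((orderOf_dvd_of_pow_eq_one hx).trans (pow_dvd_pow p h))

/-- If `a` has order dividing `p ^ (i + 1)` and `b` has order dividing `p ^ i`, then the order of
`[a^{p^j}, b^{p^k}]` divides `p ^ (i - j - k)`, and the commutator is trivial when `i < j + k`,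
which is what the truncated subtraction says. -/
def CommutatorBound (p : ℕ) (G : Type*) [Group G] (i : ℕ) : Prop :=
  ∀ (j k : ℕ) (a b : G), a ^ p ^ (i + 1) = 1 → b ^ p ^ i = 1 →
    ⁅a ^ p ^ j, b ^ p ^ k⁆ ^ p ^ (i - j - k) = 1

/-- The bound for `i` from the bounds for all larger indices, by induction on `j`. Passing from
`c = a^{p^j}` to `c^p` uses `commutator_pow_mem` modulo the subgroup of elements of `G^p` of
order dividing `p ^ t`, where `t = i - (j + 1) - k`. -/
theorem commutatorBound_step {p : ℕ} (hp : p.Prime) (hp2 : p ≠ 2) {G : Type*} [Group G]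
    [Finite G] [Nontrivial G] (hG : IsPGroup p G) (hpow : ∀ x y : G, ⁅x, y⁆ ∈ subgroupPow ⊤ p)
    (IH : ProperTorsionMulClosed p G) (i : ℕ) (hi : ∀ i' > i, CommutatorBound p G i') :
    CommutatorBound p G i := by
  intro j
  induction j with
  | zero =>
    intro k a b _ hb
    apply commutator_pow_eq_one hp hp2 hG hpow IH
    rw [← pow_mul, ← pow_add]
    exact pow_eq_one_mono (by omega) hb
  | succ j ihj =>
    intro k a b ha hb
    rcases Nat.eq_zero_or_pos (i - j - k) with h0 | h0
    · -- Here `a^{p^j}` already commutes with `b^{p^k}`.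
      have h := ihj k a b ha hb
      rw [h0, pow_zero, pow_one, commutatorElement_eq_one_iff_commute] at h
      rw [pow_succ, pow_mul, (h.pow_left p).commutator_eq, one_pow]
    obtain ⟨t, rfl⟩ : ∃ t, i = j + k + t + 1 := ⟨i - j - k - 1, by omega⟩
    rw [show j + k + t + 1 - (j + 1) - k = t by omega]
    obtain ⟨W, hW, hmem⟩ := exists_torsion_subgroup hp hp2 hG hpow IH t
    have hcomm := powSeries_commutator hp hp2 hG hpow
    set a' := a ^ p ^ j with ha'
    have ha'D : a' ∈ powSeries p G j := pow_mem_powSeries_top p a j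
    have hbD : (b ^ p ^ k)⁻¹ ∈ powSeries p G k := inv_mem (pow_mem_powSeries_top p b k)
    set u := ⁅(b ^ p ^ k)⁻¹, a'⁆ with hu
    set v := ⁅u⁻¹, a'⁆ with hv
    have hut : u ^ p ^ (t + 1) = 1 := by
      have h := ihj k a b⁻¹ ha (by rw [inv_pow, hb, inv_one])
      rw [show j + k + t + 1 - j - k = t + 1 by omega, inv_pow] at h
      rw [hu, ← commutatorElement_inv, inv_pow, h, inv_one]
    have huD : u ∈ powSeries p G (k + j + 1) := hcomm k j _ hbD _ ha'D
    have hvt : v ^ p ^ (t + 1) = 1 := by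
      rw [hv, ← commutatorElement_inv, inv_pow,
        commutator_pow_eq_one hp hp2 hG hpow IH a' (by rw [inv_pow, hut, inv_one]), inv_one]
    have hvD : v ∈ powSeries p G (k + j + 1 + j + 1) := hcomm _ j _ (inv_mem huD) _ ha'D
    obtain ⟨f, hf⟩ := exists_pow_pow_eq hp hp2 hG hpow _ huD
    obtain ⟨d, hd⟩ := exists_pow_pow_eq hp hp2 hG hpow _ hvD
    -- `d` and `f` are roots of `v` and `u`, of controlled order, to which the bound for the
    -- larger index `i + j + 1` applies.
    have hB := hi (j + k + t + 1 + j + 1) (by omega)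
    have hd1 : d ^ p ^ (j + k + t + 1 + j + 1 + 1) = 1 := by
      rw [show j + k + t + 1 + j + 1 + 1 = (k + j + 1 + j + 1) + (t + 1) by omega, pow_add,
        pow_mul, hd, hvt]
    have hf1 : f ^ p ^ (j + k + t + 1 + j + 1) = 1 := by
      refine pow_eq_one_mono (m := (k + j + 1) + (t + 1)) (by omega) ?_
      rw [pow_add, pow_mul, hf, hut]
    have hva : ⁅v, a'⁆ ∈ W := by
      refine (hmem _).2 ⟨hpow _ _, ?_⟩
      have h := hB (k + j + 1 + j + 1) j d a hd1 (pow_eq_one_mono (by omega) ha)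
      rw [hd] at h
      exact pow_eq_one_mono (by omega) h
    have hvu : ⁅v, u⁆ ∈ W := by
      refine (hmem _).2 ⟨hpow _ _, ?_⟩
      have h := hB (k + j + 1 + j + 1) (k + j + 1) d f hd1 hf1
      rw [hd, hf] at h
      exact pow_eq_one_mono (by omega) h
    have hup : u ^ p ∈ W := by
      refine (hmem _).2 ⟨pow_mem_subgroupPow (Subgroup.mem_top u) p, ?_⟩
      rw [← pow_mul, ← pow_succ', hut]
    have h := commutator_pow_mem hp hp2 W hu hv hup hva hvu
    rw [ha', ← pow_mul, ← pow_succ] at h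
    exact ((hmem _).1 h).2

/-- Descending induction on `i`: for large `i` the bound follows from
`[G^{p^j}, G^{p^k}] ≤ G^{p^{j+k+1}}`. -/
theorem commutatorBound_of_proper {p : ℕ} (hp : p.Prime) (hp2 : p ≠ 2) {G : Type*} [Group G]
    [Finite G] [Nontrivial G] (hG : IsPGroup p G) (hpow : ∀ x y : G, ⁅x, y⁆ ∈ subgroupPow ⊤ p)
    (IH : ProperTorsionMulClosed p G) (i : ℕ) : CommutatorBound p G i := by
  obtain ⟨e, he⟩ := exists_powSeries_eq_bot hp G hG
  have large : ∀ i, e ≤ i → CommutatorBound p G i := by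
    intro i hi j k a b _ _
    have h := pow_mem_powSeries (powSeries_commutator hp hp2 hG hpow j k _
      (pow_mem_powSeries_top p a j) _ (pow_mem_powSeries_top p b k)) (i - j - k)
    have hh := powSeries_antitone p G (show e ≤ j + k + 1 + (i - j - k) by omega) h
    rwa [he, Subgroup.mem_bot] at hh
  have desc : ∀ s i, e ≤ i + s → CommutatorBound p G i := by
    intro s
    induction s with
    | zero => exact fun i hi => large i hi
    | succ s ih =>
      exact fun i hi => commutatorBound_step hp hp2 hG hpow IH i fun i' hi' => ih i' (by omega)
  exact desc e i (by omega)

/-- Modulo the elements of `G^p` of order dividing `p ^ t`, two elements `x, y` of order dividing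
`p ^ (t + 1)` generate a group of class two with commutator of order `p`, by `CommutatorBound`,
so `(x y)^p` vanishes there. -/
theorem torsionMulClosed_of_proper {p : ℕ} (hp : p.Prime) (hp2 : p ≠ 2) {G : Type*} [Group G]
    [Finite G] [Nontrivial G] (hG : IsPGroup p G) (hpow : ∀ x y : G, ⁅x, y⁆ ∈ subgroupPow ⊤ p)
    (IH : ProperTorsionMulClosed p G) : TorsionMulClosed p G := by
  intro n x y hx hy
  cases n with
  | zero =>
    rw [pow_zero, pow_one] at hx hy ⊢
    rw [hx, hy, one_mul]
  | succ t =>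
    obtain ⟨W, hW, hmem⟩ := exists_torsion_subgroup hp hp2 hG hpow IH t
    have hpW : ∀ z : G, z ^ p ^ (t + 1) = 1 → z ^ p ∈ W := fun z hz =>
      (hmem _).2 ⟨pow_mem_subgroupPow (Subgroup.mem_top z) p, by rw [← pow_mul, ← pow_succ', hz]⟩
    have hc : ⁅y⁻¹, x⁻¹⁆ ^ p ^ (t + 1) = 1 :=
      commutator_pow_eq_one hp hp2 hG hpow IH _ (by rw [inv_pow, hx, inv_one])
    obtain ⟨a, ha⟩ := exists_pow_pow_eq hp hp2 hG hpow 1 (hpow y⁻¹ x⁻¹)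
    have ha1 : a ^ p ^ (t + 1 + 1) = 1 := by
      rw [add_comm (t + 1) 1, pow_add, pow_mul, ha, hc]
    have hcW : ∀ z : G, z ^ p ^ (t + 1) = 1 → ⁅⁅y⁻¹, x⁻¹⁆, z⁆ ∈ W := by
      intro z hz
      refine (hmem _).2 ⟨hpow _ _, ?_⟩
      have h := commutatorBound_of_proper hp hp2 hG hpow IH (t + 1) 1 0 a z ha1 hz
      rwa [ha, pow_zero, pow_one, Nat.sub_zero, Nat.add_sub_cancel] at h
    have h := pow_mul_mem_of_commutators hp hp2 W (hpW _ hc) (hcW x hx) (hcW y hy)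
    have hh := mul_mem (mul_mem (hpW x hx) (hpW y hy)) h
    rw [mul_inv_cancel_left] at hh
    rw [pow_succ', pow_mul]
    exact ((hmem _).1 hh).2

/-- Powerful `p`-groups, `p` odd, have `p ^ n`-torsion closed under products. The induction runs on
a bound `N` for the order of the group. -/
theorem torsionMulClosed {p : ℕ} (hp : p.Prime) (hp2 : p ≠ 2) (N : ℕ) :
    ∀ (G : Type*) [Group G] [Finite G], IsPGroup p G →
      (∀ x y : G, ⁅x, y⁆ ∈ subgroupPow ⊤ p) → Nat.card G ≤ N →
        ProperTorsionMulClosed p G ∧ TorsionMulClosed p G := by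
  induction N with
  | zero => exact fun G _ _ _ _ hN => absurd hN (by simpa using Nat.card_pos.ne')
  | succ N ih =>
    intro G _ _ hG hpow hN
    have hproper : ProperTorsionMulClosed p G := by
      intro H hH hHpow n x hx y hy hxn hyn
      have hlt : Nat.card H < Nat.card G := by
        refine lt_of_le_of_ne (Subgroup.card_le_card_group H) fun h => hH ?_
        exact Subgroup.eq_top_of_card_eq H h
      have hHpow' : ∀ x y : H, ⁅x, y⁆ ∈ subgroupPow ⊤ p := by
        intro x y
        have h := hHpow x x.2 y y.2
        rw [← map_subtype_subgroupPow] at h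
        obtain ⟨z, hz, hzeq⟩ := h
        have hz' : z = ⁅x, y⁆ := Subtype.ext hzeq
        exact hz' ▸ hz
      have h := (ih H (hG.to_subgroup H) hHpow' (by omega)).2 n ⟨x, hx⟩ ⟨y, hy⟩
        (Subtype.ext hxn) (Subtype.ext hyn)
      exact congrArg Subtype.val h
    refine ⟨hproper, ?_⟩
    rcases subsingleton_or_nontrivial G with hs | hs
    · exact fun n x y _ _ => Subsingleton.elim _ _
    · exact torsionMulClosed_of_proper hp hp2 hG hpow hproper

/-- In a group whose `p ^ n`-torsion is closed under products, `Ω_i(H)` consists of the elements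
of `H` of order dividing `p ^ i`. -/
theorem mem_omegaSubgroup_iff {p : ℕ} {G : Type*} [Group G] (hG : TorsionMulClosed p G) (i : ℕ)
    (H : Subgroup G) (x : G) : x ∈ omegaSubgroup p i H ↔ x ∈ H ∧ x ^ p ^ i = 1 := by
  refine ⟨fun hx => ?_, fun hx => Subgroup.subset_closure hx⟩
  induction hx using Subgroup.closure_induction with
  | mem x hx => exact hx
  | one => exact ⟨one_mem _, one_pow _⟩
  | mul x y _ _ hx hy => exact ⟨mul_mem hx.1 hy.1, hG i x y hx.2 hy.2⟩
  | inv x _ hx => exact ⟨inv_mem hx.1, by rw [inv_pow, hx.2, inv_one]⟩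

instance omegaSubgroup_normal {p : ℕ} {G : Type*} [Group G] (i : ℕ) (H : Subgroup G)
    [hH : H.Normal] : (omegaSubgroup p i H).Normal := by
  refine normal_closure_of_conj_mem ?_
  rintro x ⟨hx, hxi⟩ g
  refine ⟨hH.conj_mem x hx g, ?_⟩
  rw [conj_pow, hxi]; group

theorem omega_statement_7 (p : ℕ) (hp : p.Prime) (hp2 : p ≠ 2) (G : Type*) [Group G]
    [Finite G] (hG : IsPGroup p G) (hpow : IsPowerful p G) (i j : ℕ) (hi : 1 ≤ i) :
    ⁅subgroupPow (omegaSubgroup p i (subgroupPow (⊤ : Subgroup G) (p ^ 2))) (p ^ j),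
        omegaSubgroup p i (subgroupPow (⊤ : Subgroup G) p)⁆ ≤
      subgroupPow (omegaSubgroup p i (subgroupPow (⊤ : Subgroup G) (p ^ 2)))
        (p ^ (j + 2)) := by
  have hcommG : ∀ x y : G, ⁅x, y⁆ ∈ subgroupPow ⊤ p := by
    rw [IsPowerful, if_neg hp2] at hpow
    exact fun x y => hpow (Subgroup.commutator_mem_commutator trivial trivial)
  obtain ⟨hproper, hclosed⟩ := torsionMulClosed hp hp2 (Nat.card G) G hG hcommG le_rfl
  rw [Subgroup.commutator_le]
  intro x hx y hy
  refine commutator_mem_of_closure _ ?_ hx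
  rintro _ ⟨z, hz, rfl⟩
  rw [mem_omegaSubgroup_iff hclosed] at hz hy
  rcases subsingleton_or_nontrivial G with hs | hs
  · rw [Subsingleton.elim ⁅z ^ p ^ j, y⁆ 1]
    exact one_mem _
  rw [powSeries_eq hp hp2 hG hcommG] at hz ⊢
  obtain ⟨a, rfl⟩ := exists_pow_pow_eq hp hp2 hG hcommG 2 hz.1
  obtain ⟨b, rfl⟩ := exists_pow_pow_eq hp hp2 hG hcommG 1 hy.1
  rw [← pow_mul, ← pow_add]
  have hbound := commutatorBound_of_proper hp hp2 hG hcommG hproper (i + 1) (2 + j) 1 a b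
    (by rw [show i + 1 + 1 = 2 + i by omega, pow_add, pow_mul, hz.2])
    (by rw [show i + 1 = 1 + i by omega, pow_add, pow_mul, hy.2])
  rcases Nat.lt_or_ge i (j + 2) with hij | hij
  · rw [show i + 1 - (2 + j) - 1 = 0 by omega, pow_zero, pow_one] at hbound
    rw [hbound]
    exact one_mem _
  · obtain ⟨g, hg⟩ := exists_pow_pow_eq hp hp2 hG hcommG _
      (powSeries_commutator hp hp2 hG hcommG (2 + j) 1 _ (pow_mem_powSeries_top p a _) _
        (pow_mem_powSeries_top p b _))
    -- The commutator is `(g ^ p ^ 2) ^ p ^ (j + 2)`, and `g ^ p ^ 2` has order dividing `p ^ i`.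
    refine Subgroup.subset_closure ⟨g ^ p ^ 2, ?_, ?_⟩
    · refine (mem_omegaSubgroup_iff hclosed _ _ _).2 ⟨pow_mem_powSeries_top p g 2, ?_⟩
      rw [← hg, ← pow_mul, ← pow_add] at hbound
      rw [← pow_mul, ← pow_add]
      exact pow_eq_one_mono (by omega) hbound
    · rw [← hg, ← pow_mul, ← pow_add]
      rw [show 2 + (j + 2) = 2 + j + 1 + 1 by omega]
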